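/- Consider a SISO networked relative coupling system with heterogeneous subsystem drifts: fix A ∈ ℝ^{n×n}, b ∈ ℝ^{n×1}, c ∈ ℝ^{1×n}, a set S ⊆ {1,…,n}×{1,…,n} (the structure of the perturbations), a digraph G_sys on {1,…,N} without self-loops, and a driving set I_u. Suppose: (1) there exists an S-structured matrix δ̄ ∈ ℝ^{n×n} such that (A + δ̄, b) is controllable and (A + δ̄, c) is observable, and (2) the network is globally input-reachable. Then there exist S-structured matrices δA₁,…,δA_N ∈ ℝ^{n×n} and a weight vector w ∈ ℝ^{|E|} such that the pair (blockdiag(A+δA₁,…,A+δA_N) − L(w) ⊗ (b c), Δ ⊗ b) is controllable. -/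

import Mathlib

open Matrix
open scoped Kronecker

noncomputable section

/-- Kalman-matrix controllability of the pair `(M, Q)`. -/
def IsCtrb {R : Type*} [CommRing R] {ι κ : Type*} [Fintype ι] [Fintype κ] [DecidableEq ι]
    (M : Matrix ι ι R) (Q : Matrix ι κ R) : Prop :=
  (Matrix.of fun (i : ι) (jk : Fin (Fintype.card ι) × κ) =>
      (M ^ (jk.1 : ℕ) * Q) i jk.2).rank = Fintype.card ι

/-- Observability of `(M, c)`: controllability of `(Mᵀ, cᵀ)`. -/
def IsObsv {R : Type*} [CommRing R] {ι : Type*} [Fintype ι] [DecidableEq ι]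
    (M : Matrix ι ι R) (c : Matrix (Fin 1) ι R) : Prop :=
  IsCtrb Mᵀ cᵀ

/-- The weighted Laplacian of a digraph with edge set `E`:
`L(w)_{ij} = -w_{(j,i)}` for `i ≠ j` with `(j,i) ∈ E`, zero for other off-diagonal entries,
and diagonal entries making every row sum to zero. -/
def lapMat {R : Type*} [CommRing R] {N : ℕ} (E : Finset (Fin N × Fin N))
    (w : Fin N × Fin N → R) : Matrix (Fin N) (Fin N) R :=
  Matrix.of fun i j =>
    if i = j then ∑ k ∈ Finset.univ.filter (fun k => k ≠ i ∧ (k, i) ∈ E), w (k, i)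
    else if (j, i) ∈ E then -w (j, i) else 0

/-- The `N × |I_u|` matrix whose columns are the standard basis vectors `e_i`, `i ∈ I_u`. -/
def deltaMat {R : Type*} [CommRing R] {N : ℕ} (Iu : Finset (Fin N)) :
    Matrix (Fin N) {i // i ∈ Iu} R :=
  Matrix.of fun i j => if i = (j : Fin N) then 1 else 0

/-- Vertex `i` is reachable by a directed path (possibly of length zero) from a driving vertex. -/
def inputReachable {N : ℕ} (E : Finset (Fin N × Fin N)) (Iu : Finset (Fin N)) (i : Fin N) : Prop :=
  ∃ s ∈ Iu, Relation.ReflTransGen (fun a b => (a, b) ∈ E) s i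

/-- A matrix is `S`-structured if its entries vanish outside `S`. -/
def SStructured {n : ℕ} (S : Finset (Fin n × Fin n)) (M : Matrix (Fin n) (Fin n) ℝ) : Prop :=
  ∀ i j : Fin n, (i, j) ∉ S → M i j = 0

/-- Full row rank of the Kalman matrix, expressed by left annihilators. -/
theorem isCtrb_iff_forall_vecMul {K : Type*} [Field K] {ι κ : Type*} [Fintype ι] [Fintype κ]
    [DecidableEq ι] (M : Matrix ι ι K) (Q : Matrix ι κ K) :
    IsCtrb M Q ↔
      ∀ x : ι → K, (∀ k < Fintype.card ι, x ᵥ* (M ^ k * Q) = 0) → x = 0 := by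
  have key : ∀ T : Matrix ι (Fin (Fintype.card ι) × κ) K,
      T.rank = Fintype.card ι ↔ ∀ x : ι → K, x ᵥ* T = 0 → x = 0 := by
    intro T
    rw [rank_eq_finrank_span_row, eq_comm]
    have h := linearIndependent_iff_card_eq_finrank_span (R := K) (b := T.row)
    rw [Set.finrank] at h
    rw [← h, ← Matrix.vecMul_injective_iff]
    exact injective_iff_map_eq_zero T.vecMulLinear
  rw [IsCtrb, key]
  refine forall_congr' fun x => imp_congr ?_ Iff.rfl
  constructor
  · intro h k hk
    ext j
    exact congrFun h (⟨k, hk⟩, j)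
  · intro h
    ext ⟨k, j⟩
    exact congrFun (h k k.2) j

theorem map_ofReal_pow_mul {ι κ : Type*} [Fintype ι] [DecidableEq ι]
    (M : Matrix ι ι ℝ) (Q : Matrix ι κ ℝ) (k : ℕ) :
    (M ^ k * Q).map Complex.ofReal
      = M.map Complex.ofReal ^ k * Q.map Complex.ofReal :=
  (Matrix.map_mul (L := M ^ k) (M := Q) (f := Complex.ofRealHom)).trans
    (congrArg (· * Q.map Complex.ofReal) (Matrix.map_pow M Complex.ofRealHom k))

/-- A controllable real pair passes the eigenvector test over `ℂ`. -/
theorem IsCtrb.eq_zero_of_eigenvector {ι κ : Type*} [Fintype ι] [Fintype κ] [DecidableEq ι]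
    {M : Matrix ι ι ℝ} {Q : Matrix ι κ ℝ} (h : IsCtrb M Q) {μ : ℂ} {v : ι → ℂ}
    (hv : v ᵥ* M.map Complex.ofReal = μ • v) (hQ : v ᵥ* Q.map Complex.ofReal = 0) : v = 0 := by
  rw [isCtrb_iff_forall_vecMul] at h
  have hpow : ∀ k : ℕ, v ᵥ* (M.map Complex.ofReal) ^ k = μ ^ k • v := by
    intro k
    induction k with
    | zero => simp
    | succ k ih => rw [pow_succ, ← vecMul_vecMul, ih, smul_vecMul, hv, smul_smul, pow_succ]
  have hall : ∀ k : ℕ, v ᵥ* (M ^ k * Q).map Complex.ofReal = 0 := by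
    intro k
    rw [map_ofReal_pow_mul, ← vecMul_vecMul, hpow, smul_vecMul, hQ, smul_zero]
  have hre : (fun i => (v i).re) = 0 := by
    refine h _ fun k _ => ?_
    ext j
    have := congrArg Complex.re (congrFun (hall k) j)
    simpa [vecMul, dotProduct] using this
  have him : (fun i => (v i).im) = 0 := by
    refine h _ fun k _ => ?_
    ext j
    have := congrArg Complex.im (congrFun (hall k) j)
    simpa [vecMul, dotProduct] using this
  ext i
  exact Complex.ext (congrFun hre i) (congrFun him i)

/-- By Cayley-Hamilton, annihilating the Kalman matrix annihilates all `p(M) Q`. -/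
theorem vecMul_aeval_mul_eq_zero {K : Type*} [Field K] {ι κ : Type*} [Fintype ι] [Fintype κ]
    [DecidableEq ι] {M : Matrix ι ι K} {Q : Matrix ι κ K} {x : ι → K}
    (hx : ∀ k < Fintype.card ι, x ᵥ* (M ^ k * Q) = 0) (p : Polynomial K) :
    x ᵥ* (Polynomial.aeval M p * Q) = 0 := by
  rcases isEmpty_or_nonempty ι with hι | hι
  · ext j
    simp [vecMul, dotProduct]
  rw [Matrix.aeval_eq_aeval_mod_charpoly, Polynomial.aeval_eq_sum_range' (n := Fintype.card ι)]
  · rw [Matrix.sum_mul, Matrix.vecMul_sum]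
    refine Finset.sum_eq_zero fun k hk => ?_
    rw [Matrix.smul_mul, vecMul_smul, hx k (Finset.mem_range.mp hk), smul_zero]
  · have hd := Polynomial.natDegree_modByMonic_lt p M.charpoly_monic (fun h1 => by
      have := M.charpoly_natDegree_eq_dim
      rw [h1, Polynomial.natDegree_one] at this
      exact Fintype.card_ne_zero this.symm)
    rwa [M.charpoly_natDegree_eq_dim] at hd

/-- The eigenvector test over `ℂ` implies controllability of a real pair. -/
theorem isCtrb_of_forall_eigenvector {ι κ : Type*} [Fintype ι] [Fintype κ] [DecidableEq ι]
    {M : Matrix ι ι ℝ} {Q : Matrix ι κ ℝ}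
    (h : ∀ (μ : ℂ) (v : ι → ℂ), v ᵥ* M.map Complex.ofReal = μ • v →
      v ᵥ* Q.map Complex.ofReal = 0 → v = 0) : IsCtrb M Q := by
  rw [isCtrb_iff_forall_vecMul]
  intro x hx
  let W : Submodule ℂ (ι → ℂ) :=
    { carrier := {v | ∀ k : ℕ, v ᵥ* (M.map Complex.ofReal ^ k * Q.map Complex.ofReal) = 0}
      add_mem' := fun {a b} ha hb k => by rw [add_vecMul, ha k, hb k, add_zero]
      zero_mem' := fun k => zero_vecMul _
      smul_mem' := fun r a ha k => by rw [smul_vecMul, ha k, smul_zero] }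
  have hinv : ∀ v ∈ W, (M.map Complex.ofReal).vecMulLinear v ∈ W := by
    intro v hv k
    have := hv (k + 1)
    rw [pow_succ', Matrix.mul_assoc, ← vecMul_vecMul] at this
    exact this
  have hW : W = ⊥ := by
    by_contra hne
    have : Nontrivial W := Submodule.nontrivial_iff_ne_bot.mpr hne
    obtain ⟨μ, hμ⟩ := Module.End.exists_eigenvalue
      ((M.map Complex.ofReal).vecMulLinear.restrict hinv)
    obtain ⟨v, hv⟩ := hμ.exists_hasEigenvector
    have hv0 : (v : ι → ℂ) = 0 := by
      refine h μ v ?_ ?_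
      · exact congrArg Subtype.val hv.apply_eq_smul
      · simpa using v.2 0
    exact hv.2 (Subtype.ext hv0)
  have hxW : (fun i => (x i : ℂ)) ∈ W := by
    intro k
    rw [← map_ofReal_pow_mul]
    have h0 := vecMul_aeval_mul_eq_zero hx (Polynomial.X ^ k)
    rw [map_pow, Polynomial.aeval_X] at h0
    ext j
    have := congrArg Complex.ofReal (congrFun h0 j)
    simpa [vecMul, dotProduct] using this
  rw [hW, Submodule.mem_bot] at hxW
  ext i
  simpa using congrFun hxW i

/-- A network of identical controllable and observable SISO systems has no left eigenvector
annihilated by the inputs, provided the coupling matrix has none. -/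
theorem network_eigenvector_eq_zero {K ι ν : Type*} [Field K] [Fintype ι] [DecidableEq ι]
    [Fintype ν] {A : Matrix ι ι K} {b c : ι → K} {L : Matrix ν ν K} {I : Finset ν}
    (hb : ∀ (μ : K) (v : ι → K), v ᵥ* A = μ • v → v ⬝ᵥ b = 0 → v = 0)
    (hc : ∀ (μ : K) (v : ι → K), A *ᵥ v = μ • v → c ⬝ᵥ v = 0 → v = 0)
    (hL : ∀ (l : K) (u : ν → K), (∀ i ∈ I, u i = 0) → u ᵥ* L = l • u → u = 0)
    {μ : K} {x : ν → ι → K}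
    (hx : ∀ j, x j ᵥ* A - ((fun i => x i ⬝ᵥ b) ᵥ* L) j • c = μ • x j)
    (hI : ∀ i ∈ I, x i ⬝ᵥ b = 0) : x = 0 := by
  set u : ν → K := fun i => x i ⬝ᵥ b with hu
  have hB : ∀ j, x j ᵥ* (A - μ • 1) = (u ᵥ* L) j • c := by
    intro j
    rw [vecMul_sub, vecMul_smul, vecMul_one, ← hx j]
    abel
  by_cases hdet : (A - μ • 1).det = 0
  · obtain ⟨r, hr0, hr⟩ := exists_mulVec_eq_zero_iff.mpr hdet
    have hcr : c ⬝ᵥ r ≠ 0 := by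
      intro h0
      refine hr0 (hc μ r ?_ h0)
      rwa [sub_mulVec, smul_mulVec, one_mulVec, sub_eq_zero] at hr
    have hy : u ᵥ* L = 0 := by
      ext j
      have h0 := congrArg (· ⬝ᵥ r) (hB j)
      simp only [← dotProduct_mulVec, hr, dotProduct_zero, smul_dotProduct, smul_eq_mul] at h0
      exact (mul_eq_zero.mp h0.symm).resolve_right hcr
    have hu0 : u = 0 := hL 0 u hI (by rw [hy, zero_smul])
    ext1 j
    refine hb μ (x j) ?_ (congrFun hu0 j)
    simpa [hy] using hx j
  · have hunit : IsUnit (A - μ • 1).det := isUnit_iff_ne_zero.mpr hdet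
    have hxj : ∀ j, x j = (u ᵥ* L) j • (c ᵥ* (A - μ • 1)⁻¹) := by
      intro j
      rw [← smul_vecMul, ← hB j, vecMul_vecMul, mul_nonsing_inv _ hunit, vecMul_one]
    have huj : u = ((c ᵥ* (A - μ • 1)⁻¹) ⬝ᵥ b) • (u ᵥ* L) := by
      ext j
      rw [hu]
      beta_reduce
      rw [← hu]
      conv_lhs => rw [hxj j]
      simp [mul_comm]
    have hu0 : u = 0 := by
      by_cases hg : (c ᵥ* (A - μ • 1)⁻¹) ⬝ᵥ b = 0
      · rw [hg, zero_smul] at huj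
        exact huj
      · refine hL ((c ᵥ* (A - μ • 1)⁻¹) ⬝ᵥ b)⁻¹ u hI ?_
        conv_rhs => rw [huj]
        rw [smul_smul, inv_mul_cancel₀ hg, one_smul]
    ext1 j
    rw [hxj j, hu0, zero_vecMul]
    simp

/-- A breadth-first forest: every non-driving vertex has a parent one level closer to the
driving vertices. -/
theorem exists_depth_parent {N : ℕ} {E : Finset (Fin N × Fin N)} {Iu : Finset (Fin N)}
    (h : ∀ i, inputReachable E Iu i) :
    ∃ (d : Fin N → ℕ) (p : Fin N → Fin N),
      ∀ i, i ∉ Iu → (p i, i) ∈ E ∧ d i = d (p i) + 1 := by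
  classical
  let P : ℕ → Fin N → Prop := fun m =>
    Nat.rec (motive := fun _ => Fin N → Prop) (fun i => i ∈ Iu) (fun _ R i => ∃ j, R j ∧ (j, i) ∈ E) m
  have hP : ∀ i : Fin N, ∃ m : ℕ, P m i := by
    intro i
    obtain ⟨s, hs, hsi⟩ := h i
    induction hsi with
    | refl => exact ⟨0, hs⟩
    | tail _ hbc ih =>
      obtain ⟨m, hm⟩ := ih
      exact ⟨m + 1, _, hm, hbc⟩
  have hpar : ∀ i : Fin N, ∃ j : Fin N, i ∉ Iu →
      (j, i) ∈ E ∧ Nat.find (hP i) = Nat.find (hP j) + 1 := by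
    intro i
    by_cases hi : i ∈ Iu
    · exact ⟨i, fun h => absurd hi h⟩
    have hspec := Nat.find_spec (hP i)
    rcases hm : Nat.find (hP i) with _ | m
    · rw [hm] at hspec
      exact absurd hspec hi
    · rw [hm] at hspec
      obtain ⟨j, hj, hji⟩ := hspec
      refine ⟨j, fun _ => ⟨hji, ?_⟩⟩
      have hle : Nat.find (hP j) ≤ m := Nat.find_min' _ hj
      have hge : Nat.find (hP i) ≤ Nat.find (hP j) + 1 :=
        Nat.find_min' _ ⟨j, Nat.find_spec (hP j), hji⟩
      omega
  choose p hp using hpar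
  exact ⟨fun i => Nat.find (hP i), p, hp⟩

/-- On a forest with distinct nonzero weights, an eigenvector of the transposed Laplacian that
vanishes on the roots is zero. -/
theorem forest_eigenvector_eq_zero {K ν : Type*} [Field K] [Fintype ν] [DecidableEq ν]
    {I : Finset ν} {d : ν → ℕ} {p : ν → ν} {a : ν → K}
    (hd : ∀ i, i ∉ I → d i = d (p i) + 1) (ha0 : ∀ i, a i ≠ 0) (ha : Function.Injective a)
    {l : K} {u : ν → K} (hI : ∀ i ∈ I, u i = 0)
    (hu : ∀ j, ∑ i with i ∉ I ∧ p i = j, a i * u i = (a j - l) * u j) : u = 0 := by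
  classical
  by_contra hne
  have hI' : ∀ i, u i ≠ 0 → i ∉ I := fun i hi h => hi (hI i h)
  obtain ⟨k₀, hk₀⟩ := Function.ne_iff.mp hne
  obtain ⟨m, hm, hmax⟩ := (Finset.univ.filter fun i => u i ≠ 0).exists_max_image d
    ⟨k₀, by simpa using hk₀⟩
  simp only [Finset.mem_filter, Finset.mem_univ, true_and] at hm hmax
  have hchild : ∀ k, u k ≠ 0 → a k ≠ l → ∃ i, i ∉ I ∧ p i = k ∧ u i ≠ 0 := by
    intro k hk hkl
    have h0 : ∑ i with i ∉ I ∧ p i = k, a i * u i ≠ 0 := by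
      rw [hu k]
      exact mul_ne_zero (sub_ne_zero.mpr hkl) hk
    obtain ⟨i, hi, hi0⟩ := Finset.exists_ne_zero_of_sum_ne_zero h0
    simp only [Finset.mem_filter, Finset.mem_univ, true_and] at hi
    exact ⟨i, hi.1, hi.2, right_ne_zero_of_mul hi0⟩
  have hdeep : ∀ k, u k ≠ 0 → d k = d m → a k = l := by
    intro k hk hkm
    by_contra hkl
    obtain ⟨i, hiI, hik, hi0⟩ := hchild k hk hkl
    have h1 := hd i hiI
    have h2 := hmax i hi0
    rw [hik] at h1
    omega
  have haml : a m = l := hdeep m hm rfl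
  have huniq : ∀ t k, u k ≠ 0 → d k + t = d m → k = p^[t] m := by
    intro t
    induction t with
    | zero =>
      intro k hk hkm
      exact ha ((hdeep k hk hkm).trans haml.symm)
    | succ t ih =>
      intro k hk hkm
      have hkl : a k ≠ l := by
        intro h
        have := ha (h.trans haml.symm)
        subst this
        omega
      obtain ⟨i, hiI, hik, hi0⟩ := hchild k hk hkl
      have h1 := hd i hiI
      rw [hik] at h1
      have := ih i hi0 (by omega)
      rw [Function.iterate_succ_apply', ← this, hik]
  have hup : ∀ k, u k ≠ 0 → u (p k) ≠ 0 := by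
    intro k hk h0
    have hs := hu (p k)
    rw [h0, mul_zero, Finset.sum_eq_single_of_mem k (by simp [hI' k hk])] at hs
    · exact mul_ne_zero (ha0 k) hk hs
    · intro i hi hik
      simp only [Finset.mem_filter, Finset.mem_univ, true_and] at hi
      by_contra hi0
      have hi0 := right_ne_zero_of_mul hi0
      have h1 := hd i hi.1
      have h2 := hd k (hI' k hk)
      rw [hi.2] at h1
      have h3 := hmax i hi0
      exact hik ((huniq (d m - d i) i hi0 (by omega)).trans
        ((huniq (d m - d i) k hk (by omega)).symm))
  obtain ⟨k, hk, hmin⟩ := (Finset.univ.filter fun i => u i ≠ 0).exists_min_image d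
    ⟨k₀, by simpa using hk₀⟩
  simp only [Finset.mem_filter, Finset.mem_univ, true_and] at hk hmin
  have h1 := hd k (hI' k hk)
  have h2 := hmin _ (hup k hk)
  omega

/-- In an input-reachable network some weights make every left eigenvector of the Laplacian
excited by the driving vertices. -/
theorem exists_weights_eigenvector_eq_zero {N : ℕ} {E : Finset (Fin N × Fin N)}
    (hE : ∀ e ∈ E, e.1 ≠ e.2) {Iu : Finset (Fin N)} (h : ∀ i, inputReachable E Iu i) :
    ∃ w : Fin N × Fin N → ℝ, ∀ (l : ℂ) (u : Fin N → ℂ), (∀ i ∈ Iu, u i = 0) →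
      u ᵥ* (lapMat E w).map Complex.ofReal = l • u → u = 0 := by
  obtain ⟨d, p, hdp⟩ := exists_depth_parent h
  let a : Fin N → ℝ := fun i => (i : ℕ) + 1
  refine ⟨fun e => if e.2 ∉ Iu ∧ p e.2 = e.1 then a e.2 else 0, fun l u hI hu => ?_⟩
  refine forest_eigenvector_eq_zero (d := d) (p := p) (a := fun i => (a i : ℂ)) (l := l)
    (fun i hi => (hdp i hi).2) ?_ ?_ hI ?_
  · intro i
    simp only [a]
    exact_mod_cast Nat.succ_ne_zero (i : ℕ)
  · intro i j hij
    simp only [a, Complex.ofReal_inj] at hij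
    exact Fin.ext (by exact_mod_cast add_right_cancel hij)
  · intro j
    have hentry : ∀ i, i ∉ Iu → ∀ j,
        lapMat E (fun e => if e.2 ∉ Iu ∧ p e.2 = e.1 then a e.2 else 0) i j
          = (if i = j then a j else 0) - if p i = j then a i else 0 := by
      intro i hi j
      have hpi : p i ≠ i := hE _ (hdp i hi).1
      by_cases hij : i = j
      · subst hij
        simp [lapMat, hi, hpi, Finset.sum_ite_eq, (hdp i hi).1]
      · by_cases hpj : p i = j
        · subst hpj
          simp [lapMat, hij, hi, (hdp i hi).1]
        · simp [lapMat, hij, hi, hpj]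
    have hj := congrFun hu j
    have hterm : ∀ i, u i * ((lapMat E (fun e => if e.2 ∉ Iu ∧ p e.2 = e.1 then a e.2 else 0)
        i j : ℝ) : ℂ) = (if i = j then a j * u j else 0)
          - if i ∉ Iu ∧ p i = j then a i * u i else 0 := by
      intro i
      by_cases hi : i ∈ Iu
      · by_cases hij : i = j
        · subst hij
          simp [hi, hI i hi]
        · simp [hi, hI i hi, hij]
      · rw [hentry i hi j]
        by_cases hij : i = j
        · subst hij
          by_cases hpj : p i = i <;> simp [hi, hpj, mul_comm]
        · by_cases hpj : p i = j <;> simp [hi, hpj, hij, mul_comm]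
    simp only [vecMul, dotProduct, map_apply, hterm, Finset.sum_sub_distrib, Finset.sum_ite_eq',
      Finset.mem_univ, if_true, ← Finset.sum_filter, Pi.smul_apply, smul_eq_mul] at hj
    linear_combination -hj

/-- Corollary 2 of the paper. SISO NRCS with heterogeneous subsystem drifts
`A + δA_i`, the perturbations `δA_i` being `S`-structured. If some `S`-structured `δ̄` makes
`(A + δ̄, b)` controllable and `(A + δ̄, c)` observable, and the network is globally
input-reachable, then there are `S`-structured perturbations and weights making the lumped
pair controllable. -/
theorem stmt7 {n N : ℕ}
    (A : Matrix (Fin n) (Fin n) ℝ) (b : Matrix (Fin n) (Fin 1) ℝ) (c : Matrix (Fin 1) (Fin n) ℝ)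
    (S : Finset (Fin n × Fin n))
    (E : Finset (Fin N × Fin N)) (hE : ∀ e ∈ E, e.1 ≠ e.2)
    (Iu : Finset (Fin N))
    (h1 : ∃ δ : Matrix (Fin n) (Fin n) ℝ,
      SStructured S δ ∧ IsCtrb (A + δ) b ∧ IsObsv (A + δ) c)
    (h2 : ∀ i : Fin N, inputReachable E Iu i) :
    ∃ (δA : Fin N → Matrix (Fin n) (Fin n) ℝ) (w : Fin N × Fin N → ℝ),
      (∀ i : Fin N, SStructured S (δA i)) ∧
      IsCtrb
        ((Matrix.of fun p q : Fin N × Fin n =>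
            if p.1 = q.1 then (A + δA p.1) p.2 q.2 else 0) - lapMat E w ⊗ₖ (b * c))
        ((deltaMat Iu : Matrix (Fin N) {i // i ∈ Iu} ℝ) ⊗ₖ b) := by
  obtain ⟨δ, hδ, hctrb, hobsv⟩ := h1
  obtain ⟨w, hw⟩ := exists_weights_eigenvector_eq_zero hE h2
  refine ⟨fun _ => δ, w, fun _ => hδ, isCtrb_of_forall_eigenvector fun μ v hv hQ => ?_⟩
  have hb : ∀ (μ : ℂ) (v : Fin n → ℂ), v ᵥ* (A + δ).map Complex.ofReal = μ • v →
      v ⬝ᵥ (fun i => (b i 0 : ℂ)) = 0 → v = 0 := by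
    intro μ v hv h0
    refine hctrb.eq_zero_of_eigenvector hv ?_
    ext j
    rw [Subsingleton.elim j 0]
    exact h0
  have hc : ∀ (μ : ℂ) (v : Fin n → ℂ), (A + δ).map Complex.ofReal *ᵥ v = μ • v →
      (fun i => (c 0 i : ℂ)) ⬝ᵥ v = 0 → v = 0 := by
    intro μ v hv h0
    refine IsCtrb.eq_zero_of_eigenvector hobsv (μ := μ) ?_ ?_
    · rw [transpose_map, vecMul_transpose, hv]
    · ext j
      rw [Subsingleton.elim j 0]
      rw [dotProduct_comm] at h0
      exact h0
  have hx : (fun (j : Fin N) (q : Fin n) => v (j, q)) = 0 := by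
    refine network_eigenvector_eq_zero hb hc hw (μ := μ) ?_ ?_
    · intro j
      ext q
      have h0 := congrFun hv (j, q)
      rw [Pi.smul_apply, ← show _ = μ • v (j, q) from h0]
      simp only [vecMul, dotProduct, map_apply, Fintype.sum_prod_type, Pi.sub_apply,
        Pi.smul_apply, smul_eq_mul, Matrix.sub_apply, of_apply, kroneckerMap_apply, mul_apply,
        Fin.sum_univ_one, Fin.isValue, Complex.ofReal_sub, Complex.ofReal_mul, mul_sub,
        Finset.sum_sub_distrib, Finset.sum_mul]
      congr 1
      · rw [Finset.sum_comm]
        refine Finset.sum_congr rfl fun p _ => ?_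
        rw [Finset.sum_eq_single_of_mem j (Finset.mem_univ j)]
        · simp
        · intro i _ hij
          simp [hij]
      · refine Finset.sum_congr rfl fun i _ => Finset.sum_congr rfl fun p _ => ?_
        ring
    · intro i hi
      have h0 := congrFun hQ (⟨i, hi⟩, 0)
      simp only [vecMul, dotProduct, map_apply, Fintype.sum_prod_type, kroneckerMap_apply,
        deltaMat, of_apply, Complex.ofReal_mul] at h0
      rw [Finset.sum_eq_single_of_mem i (Finset.mem_univ i)] at h0
      · simpa [dotProduct] using h0
      · intro k _ hki
        simp [hki]
  ext ⟨j, q⟩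
  exact congrFun (congrFun hx j) q
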